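/- arXiv:2411.11849 — 3 statements merged into one kernel-verified Lean document; each statement's English description precedes it below -/
import Mathlib

section
/- For every non-negative integer m, ∑_{n=1}^∞ 4^n · O_{n+m} / (n² · C(2(n+m), n+m) · C(n+m, m)) = (1 / C(2m, m)) · ( O_m · (3 ζ(2) − 4 O_m^{(2)}) + 7 ζ(3) − 8 O_m^{(3)} ). -/
open scoped BigOperators

/-- Generalized odd harmonic number `O_m^{(r)} = ∑_{j=1}^m 1/(2j−1)^r`. -/
noncomputable def oddH (r m : ℕ) : ℂ :=
  ∑ j ∈ Finset.Icc 1 m, 1 / (2 * (j : ℂ) - 1) ^ r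

/-!
Put `D s n x = (-1)ⁿ Δⁿ (x⁻ˢ)`, so that `D s n x - D s n (x + 1) = D s (n + 1) x`. The Leibniz rule
for `x⁻ˢ = x * x⁻⁽ˢ⁺¹⁾` is a recurrence linking `D (s + 1)` to `D s`; by induction on `s` it gives
`∑ₙ D s (n + 1) x / (n + 1) = s / xˢ⁺¹`. The left side is `F x - F (x + 1)` with
`F x = ∑ₙ D s n x / (n + 1)`, so summing over `x, x + 1, x + 2, …` yields Hasse's series
`∑ₙ D s n x / (n + 1) = ∑ₖ s / (x + k)ˢ⁺¹`.

At `x = m + 1/2` the right side combines `ζ(s + 1)` and `O_m^{(s+1)}`. The binomial weight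
`4ⁿ⁺¹ / ((n + 1)² C(2(n+1+m), n+1+m) C(n+1+m, m))` equals `D 1 n x / ((n + 1) C(2m, m))`, and
`D 2 n x = D 1 n x * ∑_{j ≤ n} 1 / (x + j)`, where the last sum is twice `O_{n+1+m} - O_m`.
-/

open Filter Finset Topology

section Sequences

variable {a : ℕ → ℝ}

lemma hasSum_sub_succ_of_antitone {L : ℝ} (ha : Antitone a) (hL : Tendsto a atTop (𝓝 L)) :
    HasSum (fun n => a n - a (n + 1)) (a 0 - L) := by
  rw [hasSum_iff_tendsto_nat_of_nonneg fun n => sub_nonneg.2 (ha n.le_succ)]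
  simpa only [sum_range_sub'] using hL.const_sub (a 0)

lemma summable_sub_succ_of_antitone (ha : Antitone a) (hb : BddBelow (Set.range a)) :
    Summable fun n => a n - a (n + 1) :=
  (hasSum_sub_succ_of_antitone ha (tendsto_atTop_ciInf ha hb)).summable

lemma tendsto_zero_of_antitone_of_summable_div_succ (ha : Antitone a) (h0 : ∀ n, 0 ≤ a n)
    (hs : Summable fun n : ℕ => a n / (n + 1)) : Tendsto a atTop (𝓝 0) := by
  have hb : BddBelow (Set.range a) := ⟨0, Set.forall_mem_range.2 h0⟩
  have hlim := tendsto_atTop_ciInf ha hb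
  rcases (le_ciInf h0).eq_or_lt with hzero | hpos
  · rwa [← hzero] at hlim
  have hharm : Summable fun n : ℕ => (⨅ i, a i) * (1 / ((n + 1 : ℕ) : ℝ)) := by
    refine hs.of_nonneg_of_le (fun n => by positivity) fun n => ?_
    rw [mul_one_div, Nat.cast_succ]
    gcongr
    exact ciInf_le hb n
  rw [summable_mul_left_iff hpos.ne', summable_nat_add_iff (f := fun n : ℕ => 1 / (n : ℝ))] at hharm
  exact absurd hharm Real.not_summable_one_div_natCast

end Sequences

/-- The alternating `n`-th difference `(-1)ⁿ Δⁿ f` of `f y = y⁻ˢ`, taken with step `1` at `x`;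
equivalently `∑_{k ≤ n} (-1)ᵏ C(n, k) / (x + k)ˢ`. These are the terms of Hasse's series. -/
noncomputable def invPowDiff (s n : ℕ) (x : ℝ) : ℝ :=
  (-1) ^ n * (fwdDiff 1)^[n] (fun y : ℝ => 1 / y ^ s) x

lemma invPowDiff_zero_right (s : ℕ) (x : ℝ) : invPowDiff s 0 x = 1 / x ^ s := by
  simp [invPowDiff]

lemma invPowDiff_succ (s n : ℕ) (x : ℝ) :
    invPowDiff s (n + 1) x = invPowDiff s n x - invPowDiff s n (x + 1) := by
  rw [invPowDiff, Function.iterate_succ_apply', fwdDiff, invPowDiff, invPowDiff]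
  ring

lemma invPowDiff_zero_left_succ (n : ℕ) (x : ℝ) : invPowDiff 0 (n + 1) x = 0 := by
  induction n generalizing x with
  | zero => simp [invPowDiff_succ, invPowDiff_zero_right]
  | succ n ih => rw [invPowDiff_succ, ih, ih, sub_zero]

section Positive

variable {x : ℝ}

lemma add_succ_mul_invPowDiff_succ (s n : ℕ) (hx : 0 < x) :
    (x + n + 1) * invPowDiff (s + 1) (n + 1) x =
      invPowDiff s (n + 1) x + (n + 1) * invPowDiff (s + 1) n x := by
  induction n generalizing x with
  | zero =>
    simp only [invPowDiff_succ, invPowDiff_zero_right, Nat.cast_zero]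
    field_simp
    ring
  | succ n ih =>
    have hshift := ih (add_pos hx one_pos)
    rw [invPowDiff_succ (s + 1) (n + 1), invPowDiff_succ s (n + 1)]
    push_cast
    linear_combination ih hx - hshift - (n + 1) * invPowDiff_succ (s + 1) n x

lemma invPowDiff_nonneg (s n : ℕ) (hx : 0 < x) : 0 ≤ invPowDiff s n x := by
  induction s generalizing n with
  | zero =>
    cases n with
    | zero => simp [invPowDiff_zero_right]
    | succ n => rw [invPowDiff_zero_left_succ]
  | succ s ihs =>
    induction n with
    | zero => rw [invPowDiff_zero_right]; positivity
    | succ n ihn =>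
      refine nonneg_of_mul_nonneg_right ?_ (by positivity : 0 < x + n + 1)
      rw [add_succ_mul_invPowDiff_succ s n hx]
      have := ihs (n + 1)
      positivity

lemma antitone_invPowDiff (s : ℕ) (hx : 0 < x) : Antitone fun n => invPowDiff s n x :=
  antitone_nat_of_succ_le fun n => by
    rw [invPowDiff_succ]
    exact sub_le_self _ (invPowDiff_nonneg s n (by positivity))

lemma invPowDiff_le (s n : ℕ) (hx : 0 < x) : invPowDiff s n x ≤ 1 / x ^ s :=
  (antitone_invPowDiff s hx n.zero_le).trans_eq (invPowDiff_zero_right s x)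

lemma antitone_invPowDiff_add (s n : ℕ) (hx : 0 < x) :
    Antitone fun k : ℕ => invPowDiff s n (x + k) :=
  antitone_nat_of_succ_le fun k => by
    have := invPowDiff_nonneg s (n + 1) (by positivity : 0 < x + k)
    rw [invPowDiff_succ] at this
    push_cast
    rw [← add_assoc]
    linarith

lemma tendsto_invPowDiff_add {s : ℕ} (hs : s ≠ 0) (n : ℕ) (hx : 0 < x) :
    Tendsto (fun k : ℕ => invPowDiff s n (x + k)) atTop (𝓝 0) := by
  have hpow : Tendsto (fun k : ℕ => 1 / (x + k) ^ s) atTop (𝓝 0) :=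
    ((tendsto_pow_atTop hs).comp
      (tendsto_atTop_add_const_left _ x tendsto_natCast_atTop_atTop)).const_div_atTop 1
  exact squeeze_zero (fun k => invPowDiff_nonneg s n (by positivity))
    (fun k => invPowDiff_le s n (by positivity)) hpow

lemma invPowDiff_succ_succ_div (s n : ℕ) (hx : 0 < x) :
    invPowDiff (s + 1) (n + 1) x / (n + 1) =
      (invPowDiff s (n + 1) x / (n + 1) +
        (invPowDiff (s + 1) n x - invPowDiff (s + 1) (n + 1) x)) / x := by
  field_simp
  linear_combination add_succ_mul_invPowDiff_succ s n hx

lemma summable_invPowDiff_succ_div (s : ℕ) (hx : 0 < x) :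
    Summable fun n : ℕ => invPowDiff s (n + 1) x / (n + 1) := by
  induction s with
  | zero => simpa only [invPowDiff_zero_left_succ, zero_div] using summable_zero
  | succ s ih =>
    simp only [invPowDiff_succ_succ_div s _ hx]
    have hb : BddBelow (Set.range fun n => invPowDiff (s + 1) n x) :=
      ⟨0, Set.forall_mem_range.2 fun n => invPowDiff_nonneg (s + 1) n hx⟩
    exact (ih.add (summable_sub_succ_of_antitone (antitone_invPowDiff (s + 1) hx) hb)).div_const x

lemma summable_invPowDiff_div (s : ℕ) (hx : 0 < x) :
    Summable fun n : ℕ => invPowDiff s n x / (n + 1) := by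
  rw [← summable_nat_add_iff 1]
  refine (summable_invPowDiff_succ_div s hx).of_nonneg_of_le (fun n => ?_) fun n => ?_
  all_goals have := invPowDiff_nonneg s (n + 1) hx
  · positivity
  · push_cast
    gcongr
    linarith

lemma tendsto_invPowDiff (s : ℕ) (hx : 0 < x) :
    Tendsto (fun n => invPowDiff s n x) atTop (𝓝 0) :=
  tendsto_zero_of_antitone_of_summable_div_succ (antitone_invPowDiff s hx)
    (fun n => invPowDiff_nonneg s n hx) (summable_invPowDiff_div s hx)

lemma hasSum_invPowDiff_succ_div (s : ℕ) (hx : 0 < x) :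
    HasSum (fun n : ℕ => invPowDiff s (n + 1) x / (n + 1)) (s / x ^ (s + 1)) := by
  induction s with
  | zero => simp [invPowDiff_zero_left_succ]
  | succ s ih =>
    have htel := hasSum_sub_succ_of_antitone (antitone_invPowDiff (s + 1) hx)
      (tendsto_invPowDiff (s + 1) hx)
    simp only [invPowDiff_succ_succ_div s _ hx]
    convert! (ih.add htel).div_const x using 1
    rw [invPowDiff_zero_right]
    field_simp
    push_cast
    ring

lemma hasSum_div_add_pow_succ {s : ℕ} (hs : s ≠ 0) (hx : 0 < x) :
    HasSum (fun k : ℕ => s / (x + k) ^ (s + 1)) (∑' n : ℕ, invPowDiff s n x / (n + 1)) := by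
  set F : ℕ → ℝ := fun k => ∑' n : ℕ, invPowDiff s n (x + k) / (n + 1) with hF
  have hsummable (k : ℕ) := summable_invPowDiff_div s (by positivity : 0 < x + k)
  have hstep (k : ℕ) : F k - F (k + 1) = s / (x + k) ^ (s + 1) := by
    rw [← (hasSum_invPowDiff_succ_div s (by positivity : 0 < x + k)).tsum_eq, hF,
      ← (hsummable k).tsum_sub (hsummable (k + 1))]
    simp only [Nat.cast_succ, ← add_assoc, ← sub_div, invPowDiff_succ]
  have hdom (k n : ℕ) : ‖invPowDiff s n (x + k) / (n + 1)‖ ≤ invPowDiff s n x / (n + 1) := by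
    have hk := invPowDiff_nonneg s n (by positivity : 0 < x + k)
    rw [Real.norm_of_nonneg (by positivity)]
    gcongr
    simpa using antitone_invPowDiff_add s n hx k.zero_le
  have hlim : Tendsto F atTop (𝓝 0) := by
    simpa using tendsto_tsum_of_dominated_convergence (summable_invPowDiff_div s hx)
      (fun n => (tendsto_invPowDiff_add hs n hx).div_const ((n : ℝ) + 1))
      (Eventually.of_forall hdom)
  have hanti : Antitone F := antitone_nat_of_succ_le fun k => by
    rw [← sub_nonneg, hstep]
    positivity
  have hsum := hasSum_sub_succ_of_antitone hanti hlim
  simp only [hstep, sub_zero] at hsum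
  simpa only [hF, Nat.cast_zero, add_zero] using hsum

lemma invPowDiff_two (n : ℕ) (hx : 0 < x) :
    invPowDiff 2 n x = invPowDiff 1 n x * ∑ j ∈ range (n + 1), 1 / (x + j) := by
  induction n with
  | zero =>
    simp only [invPowDiff_zero_right, zero_add, sum_range_one, Nat.cast_zero, add_zero]
    field_simp
  | succ n ih =>
    have hone := add_succ_mul_invPowDiff_succ 0 n hx
    have htwo := add_succ_mul_invPowDiff_succ 1 n hx
    rw [invPowDiff_zero_left_succ, zero_add] at hone
    have hpos : x + n + 1 ≠ 0 := by positivity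
    rw [sum_range_succ]
    push_cast
    rw [← add_assoc]
    refine mul_left_cancel₀ hpos ?_
    rw [htwo, ih]
    field_simp
    linear_combination -(∑ j ∈ range (n + 1), 1 / (x + j)) * hone

end Positive

lemma oddH_add (r n m : ℕ) :
    oddH r (n + m) = oddH r m + ∑ j ∈ range n, 1 / (2 * ((m : ℂ) + j) + 1) ^ r := by
  induction n with
  | zero => simp
  | succ n ih =>
    rw [sum_range_succ, ← add_assoc, ← ih, add_right_comm, oddH, sum_Icc_succ_top (by lia), ← oddH]
    push_cast
    ring_nf

lemma oddH_one_add (n m : ℕ) :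
    oddH 1 (n + m) = oddH 1 m + (∑ j ∈ range n, 1 / ((m : ℂ) + 1 / 2 + j)) / 2 := by
  rw [oddH_add, sum_div]
  congr! 2 with j
  rw [pow_one, div_div]
  ring_nf

lemma hasSum_one_div_odd_pow {r : ℕ} (hr : 1 < r) :
    HasSum (fun k : ℕ => 1 / (2 * (k : ℂ) + 1) ^ r) ((1 - 1 / 2 ^ r) * riemannZeta r) := by
  have hall : Summable fun n : ℕ => 1 / (n : ℂ) ^ r := by
    simpa using Complex.summable_ofReal.2 (Real.summable_one_div_nat_pow.2 hr)
  have heven : Summable fun k : ℕ => 1 / ((2 * k : ℕ) : ℂ) ^ r :=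
    hall.comp_injective (mul_right_injective₀ two_ne_zero)
  have hodd : Summable fun k : ℕ => 1 / ((2 * k + 1 : ℕ) : ℂ) ^ r :=
    hall.comp_injective fun a b h => by simpa using h
  have heven_tsum : ∑' k : ℕ, 1 / ((2 * k : ℕ) : ℂ) ^ r = 1 / 2 ^ r * riemannZeta r := by
    rw [zeta_nat_eq_tsum_of_gt_one hr, ← tsum_mul_left]
    exact tsum_congr fun k => by push_cast; rw [mul_pow, one_div_mul_one_div]
  have hsplit := tsum_even_add_odd (f := fun n : ℕ => 1 / (n : ℂ) ^ r) heven hodd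
  rw [heven_tsum, ← zeta_nat_eq_tsum_of_gt_one hr] at hsplit
  have hodd_tsum : ∑' k : ℕ, 1 / ((2 * k + 1 : ℕ) : ℂ) ^ r = (1 - 1 / 2 ^ r) * riemannZeta r := by
    linear_combination hsplit
  have hsum := hodd.hasSum
  rw [hodd_tsum] at hsum
  exact_mod_cast hsum

lemma hasSum_one_div_add_half_pow {r : ℕ} (hr : 1 < r) (m : ℕ) :
    HasSum (fun k : ℕ => 1 / ((m : ℂ) + 1 / 2 + k) ^ r)
      ((2 ^ r - 1) * riemannZeta r - 2 ^ r * oddH r m) := by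
  have hinit : oddH r m = ∑ i ∈ range m, 1 / (2 * (i : ℂ) + 1) ^ r := by
    simpa [oddH] using oddH_add r m 0
  have htail := ((hasSum_nat_add_iff' m).2 (hasSum_one_div_odd_pow hr)).mul_left ((2 : ℂ) ^ r)
  rw [← hinit] at htail
  convert! htail using 1
  · funext k
    rw [show 2 * ((k + m : ℕ) : ℂ) + 1 = 2 * (m + 1 / 2 + k) by push_cast; ring, mul_pow]
    field_simp
  · field_simp

lemma hasSum_invPowDiff_half_div {s : ℕ} (hs : s ≠ 0) (m : ℕ) :
    HasSum (fun n : ℕ => (invPowDiff s n (m + 1 / 2) : ℂ) / (n + 1))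
      (s * ((2 ^ (s + 1) - 1) * riemannZeta (s + 1 : ℕ) - 2 ^ (s + 1) * oddH (s + 1) m)) := by
  have hx : (0 : ℝ) < m + 1 / 2 := by positivity
  have hHasse := Complex.hasSum_ofReal.2 (hasSum_div_add_pow_succ hs hx)
  have hzeta := (hasSum_one_div_add_half_pow (by lia : 1 < s + 1) m).mul_left (s : ℂ)
  have hsum := Complex.hasSum_ofReal.2 (summable_invPowDiff_div s hx).hasSum
  rw [hHasse.unique (hzeta.congr_fun fun k => by push_cast; ring)] at hsum
  exact_mod_cast hsum

lemma four_pow_mul_centralBinom (m n : ℕ) :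
    (4 : ℝ) ^ (n + 1) * m.centralBinom =
      (n + 1) * invPowDiff 1 n (m + 1 / 2) * (n + 1 + m).centralBinom * (n + 1 + m).choose m := by
  have hcentral (k : ℕ) : ((k : ℝ) + 1) * (k + 1).centralBinom =
      2 * (2 * k + 1) * k.centralBinom := by
    exact_mod_cast k.succ_mul_centralBinom_succ
  induction n with
  | zero =>
    have h := hcentral m
    simp only [invPowDiff_zero_right, zero_add, add_comm 1 m, Nat.choose_succ_self_right]
    push_cast
    field_simp
    linear_combination -2 * h
  | succ n ih =>
    have hdiff := add_succ_mul_invPowDiff_succ 0 n (by positivity : (0 : ℝ) < m + 1 / 2)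
    rw [invPowDiff_zero_left_succ, zero_add] at hdiff
    have hchoose : ((n + 1 + m).choose m : ℝ) * (n + 1 + m + 1) =
        (n + 1 + m + 1).choose m * (n + 2) := by
      have := Nat.choose_mul_succ_eq (n + 1 + m) m
      rw [show n + 1 + m + 1 - m = n + 2 by lia] at this
      exact_mod_cast this
    have hbinom := hcentral (n + 1 + m)
    rw [add_right_comm (n + 1) 1 m, pow_succ]
    push_cast at hbinom ⊢
    linear_combination 4 * ih - 4 * (n + 1 + m).choose m * (n + 1 + m).centralBinom * hdiff -
      invPowDiff 1 (n + 1) (m + 1 / 2) * (n + 1 + m).choose m * hbinom +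
      invPowDiff 1 (n + 1) (m + 1 / 2) * (n + 1 + m + 1).centralBinom * hchoose

lemma four_pow_mul_oddH_div (m n : ℕ) :
    (4 : ℂ) ^ (n + 1) * oddH 1 (n + 1 + m) /
        (((n : ℂ) + 1) ^ 2 * (n + 1 + m).centralBinom * (n + 1 + m).choose m) =
      1 / m.centralBinom * (oddH 1 m * (invPowDiff 1 n (m + 1 / 2) / (n + 1)) +
        invPowDiff 2 n (m + 1 / 2) / (n + 1) / 2) := by
  have hweight : (4 : ℂ) ^ (n + 1) * m.centralBinom = (n + 1) * invPowDiff 1 n (m + 1 / 2) *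
      (n + 1 + m).centralBinom * (n + 1 + m).choose m := by
    exact_mod_cast congrArg Complex.ofReal (four_pow_mul_centralBinom m n)
  have hn : (n : ℂ) + 1 ≠ 0 := n.cast_add_one_ne_zero
  have hm : (m.centralBinom : ℂ) ≠ 0 := mod_cast m.centralBinom_ne_zero
  have hnm : ((n + 1 + m).centralBinom : ℂ) ≠ 0 := mod_cast (n + 1 + m).centralBinom_ne_zero
  have hchoose : ((n + 1 + m).choose m : ℂ) ≠ 0 := mod_cast (Nat.choose_pos (by lia)).ne'
  rw [invPowDiff_two n (by positivity), oddH_one_add]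
  push_cast
  generalize invPowDiff 1 n (m + 1 / 2) = d at hweight ⊢
  generalize ∑ j ∈ range (n + 1), 1 / ((m : ℂ) + 1 / 2 + j) = t
  field_simp
  linear_combination (2 * oddH 1 m + t) * hweight

theorem stmt_7 (m : ℕ) :
    ∑' n : ℕ, (4 : ℂ) ^ (n + 1) * oddH 1 (n + 1 + m) /
        (((n : ℂ) + 1) ^ 2 * (Nat.choose (2 * (n + 1 + m)) (n + 1 + m) : ℂ) *
          (Nat.choose (n + 1 + m) m : ℂ)) =
      (1 / (Nat.choose (2 * m) m : ℂ)) *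
        (oddH 1 m * (3 * riemannZeta 2 - 4 * oddH 2 m) +
          7 * riemannZeta 3 - 8 * oddH 3 m) := by
  have hone := hasSum_invPowDiff_half_div one_ne_zero m
  have htwo := hasSum_invPowDiff_half_div two_ne_zero m
  have hsum := ((hone.mul_left (oddH 1 m)).add (htwo.div_const 2)).mul_left
    (1 / (m.centralBinom : ℂ))
  simp only [← Nat.centralBinom_eq_two_mul_choose, four_pow_mul_oddH_div]
  rw [hsum.tsum_eq]
  push_cast
  ring_nf
end

section
/- ∑_{n=1}^∞ (H_n² + H_n^{(2)}) / n² = 6 ζ(4). -/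
open scoped BigOperators

/-- Generalized harmonic number `H_n^{(2)} = ∑_{j=1}^n 1/j²`. -/
noncomputable def H2 (n : ℕ) : ℂ := ∑ j ∈ Finset.Icc 1 n, 1 / (j : ℂ) ^ 2

/-!
The maximum of `n` independent standard exponential variables has distribution function
`(1 - e⁻ᵗ) ^ n`, and integration by parts shows that its `k`-th moment is `k!` times the sum of
`1 / (j₁ ⋯ j_k)` over `n ≥ j₁ ≥ ⋯ ≥ j_k ≥ 1`; for `k = 2` the latter is `(H_n² + H_n^{(2)}) / 2`.
By the logarithm series, the densities with weights `1 / n²` add up to `t / (eᵗ - 1)`. Hence the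
moments with the same weights add up to `∫ t ^ (k + 1) / (eᵗ - 1) = (k + 1)! ζ(k + 2)`.
-/

open MeasureTheory Set Filter Topology

theorem hasSum_integral_of_nonneg {α ι : Type*} [Countable ι] [MeasurableSpace α] {μ : Measure α}
    {f : ι → α → ℝ} {g : α → ℝ} (hf : ∀ i, AEStronglyMeasurable (f i) μ)
    (hf_nonneg : ∀ i, 0 ≤ᵐ[μ] f i) (hg : Integrable g μ)
    (hfg : ∀ᵐ a ∂μ, HasSum (fun i ↦ f i a) (g a)) :
    HasSum (fun i ↦ ∫ a, f i a ∂μ) (∫ a, g a ∂μ) := by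
  refine hasSum_integral_of_dominated_convergence f hf (fun i ↦ ?_)
    (hfg.mono fun a ha ↦ ha.summable) (hg.congr (hfg.mono fun a ha ↦ ha.tsum_eq.symm)) hfg
  exact (hf_nonneg i).mono fun a ha ↦ (Real.norm_of_nonneg ha).le

theorem hasSum_exp_neg_add_one_mul {t : ℝ} (ht : 0 < t) :
    HasSum (fun n : ℕ ↦ Real.exp (-(n + 1) * t)) (1 / (Real.exp t - 1)) := by
  have hexp : Real.exp (-t) < 1 := by simpa using ht
  convert! (hasSum_geometric_of_lt_one (Real.exp_pos _).le hexp).mul_left (Real.exp (-t)) using 1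
  · ext n
    rw [← Real.exp_nat_mul, ← Real.exp_add]
    ring_nf
  · have : Real.exp t - 1 ≠ 0 := by simpa [sub_eq_zero] using ht.ne'
    have hne : 1 - Real.exp (-t) ≠ 0 := by linarith
    rw [Real.exp_neg] at hne ⊢
    field_simp

theorem mellin_one_div_exp_sub_one {s : ℂ} (hs : 1 < s.re) :
    mellin (fun t ↦ ((1 / (Real.exp t - 1) : ℝ) : ℂ)) s = Complex.Gamma s * riemannZeta s := by
  have hsummable : Summable fun n : ℕ ↦ ‖(1 : ℂ)‖ / ((n : ℝ) + 1) ^ s.re := by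
    simpa using (summable_nat_add_iff 1).mpr (Real.summable_one_div_nat_rpow.mpr hs)
  have h := hasSum_mellin (a := fun _ : ℕ ↦ 1) (p := fun n ↦ (n : ℝ) + 1) (s := s)
    (fun n ↦ .inr (by positivity)) (by linarith)
    (fun t ht ↦ by
      simpa only [one_mul] using Complex.hasSum_ofReal.mpr (hasSum_exp_neg_add_one_mul ht))
    hsummable
  rw [← h.tsum_eq, zeta_eq_tsum_one_div_nat_add_one_cpow hs, ← tsum_mul_left]
  simp [div_eq_mul_inv]

theorem integral_pow_div_exp_sub_one {k : ℕ} (hk : k ≠ 0) :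
    ((∫ t in Ioi 0, t ^ k / (Real.exp t - 1) : ℝ) : ℂ) = k.factorial * riemannZeta (k + 1) := by
  have hre : 1 < ((k : ℂ) + 1).re := by simpa using Nat.pos_of_ne_zero hk
  rw [← Complex.Gamma_nat_eq_factorial, ← mellin_one_div_exp_sub_one hre,
    ← integral_complex_ofReal, mellin]
  simp [div_eq_mul_inv]

theorem integrableOn_pow_div_exp_sub_one {k : ℕ} (hk : k ≠ 0) :
    IntegrableOn (fun t : ℝ ↦ t ^ k / (Real.exp t - 1)) (Ioi 0) := by
  refine Integrable.of_integral_ne_zero (Complex.ofReal_ne_zero.mp ?_)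
  rw [integral_pow_div_exp_sub_one hk]
  refine mul_ne_zero (mod_cast k.factorial_ne_zero) (riemannZeta_ne_zero_of_one_lt_re ?_)
  simpa using Nat.pos_of_ne_zero hk

/-- The multiple harmonic star sum `∑ 1 / (j₁ ⋯ j_k)` over `n ≥ j₁ ≥ ⋯ ≥ j_k ≥ 1`, that is, the
complete homogeneous symmetric polynomial of degree `k` in `1, 1/2, …, 1/n`. It extends `harmonic`,
the case `k = 1`. -/
def starHarmonic : ℕ → ℕ → ℚ
  | 0, _ => 1
  | k + 1, n => ∑ i ∈ Finset.range n, starHarmonic k (i + 1) / (i + 1)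

theorem starHarmonic_zero_left (n : ℕ) : starHarmonic 0 n = 1 := rfl

theorem starHarmonic_succ_zero (k : ℕ) : starHarmonic (k + 1) 0 = 0 := rfl

theorem starHarmonic_succ_succ (k n : ℕ) :
    starHarmonic (k + 1) (n + 1) = starHarmonic (k + 1) n + starHarmonic k (n + 1) / (n + 1) :=
  Finset.sum_range_succ ..

theorem starHarmonic_one (n : ℕ) : starHarmonic 1 n = harmonic n := by
  simp [starHarmonic, harmonic]

theorem two_mul_starHarmonic_two (n : ℕ) :
    2 * (starHarmonic 2 n : ℂ) = (harmonic n : ℂ) ^ 2 + H2 n := by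
  induction n with
  | zero => simp [starHarmonic_succ_zero, H2]
  | succ n ih =>
    have hH2 : H2 (n + 1) = H2 n + 1 / ((n : ℂ) + 1) ^ 2 := by
      simp [H2, Finset.sum_Icc_succ_top]
    rw [starHarmonic_succ_succ, starHarmonic_one, harmonic_succ, hH2]
    push_cast
    rw [one_div, ← inv_pow]
    linear_combination ih

/-- The density on `(0, ∞)` of the maximum of `n` independent exponential variables of rate `1`,
the derivative of the distribution function `(1 - e⁻ᵗ) ^ n`. For `n = 0` it is `0`. -/
noncomputable def expMaxDensity (n : ℕ) (t : ℝ) : ℝ :=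
  n * (1 - Real.exp (-t)) ^ (n - 1) * Real.exp (-t)

namespace expMaxDensity

theorem nonneg (n : ℕ) {t : ℝ} (ht : 0 ≤ t) : 0 ≤ expMaxDensity n t := by
  have : 0 ≤ 1 - Real.exp (-t) := by simpa using ht
  unfold expMaxDensity
  positivity

theorem integrableOn_pow_mul (k n : ℕ) :
    IntegrableOn (fun t ↦ t ^ k * expMaxDensity n t) (Ioi 0) := by
  have hGamma : IntegrableOn (fun t : ℝ ↦ Real.exp (-t) * t ^ k) (Ioi 0) := by
    simpa using Real.GammaIntegral_convergent (s := k + 1) (by positivity)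
  have hbound : ∀ᵐ t ∂volume.restrict (Ioi (0 : ℝ)),
      ‖(n : ℝ) * (1 - Real.exp (-t)) ^ (n - 1)‖ ≤ n := by
    filter_upwards [ae_restrict_mem measurableSet_Ioi] with t (ht : 0 < t)
    have h₀ : 0 ≤ 1 - Real.exp (-t) := by simpa using ht.le
    have h₁ : 1 - Real.exp (-t) ≤ 1 := by linarith [Real.exp_pos (-t)]
    rw [Real.norm_of_nonneg (by positivity)]
    exact mul_le_of_le_one_right (by positivity) (pow_le_one₀ h₀ h₁)
  refine (hGamma.bdd_mul (by fun_prop) hbound).congr (ae_of_all _ fun t ↦ ?_)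
  simp only [expMaxDensity]
  ring

theorem hasDerivAt_cdf (n : ℕ) (t : ℝ) :
    HasDerivAt (fun t ↦ (1 - Real.exp (-t)) ^ n) (expMaxDensity n t) t := by
  have h : HasDerivAt (fun t ↦ 1 - Real.exp (-t)) (Real.exp (-t)) t := by
    simpa using (hasDerivAt_neg t).exp.const_sub 1
  exact h.fun_pow n

theorem tendsto_cdf_atTop (n : ℕ) :
    Tendsto (fun t ↦ (1 - Real.exp (-t)) ^ n) atTop (𝓝 1) := by
  simpa using (Real.tendsto_exp_neg_atTop_nhds_zero.const_sub 1).pow n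

theorem integral_eq_one {n : ℕ} (hn : n ≠ 0) : ∫ t in Ioi 0, expMaxDensity n t = 1 := by
  have hint : IntegrableOn (expMaxDensity n) (Ioi 0) := by simpa using integrableOn_pow_mul 0 n
  simpa [hn] using integral_Ioi_of_hasDerivAt_of_tendsto' (fun t _ ↦ hasDerivAt_cdf n t) hint
    (tendsto_cdf_atTop n)

theorem cdf_mul_exp_neg (n : ℕ) (t : ℝ) :
    (1 - Real.exp (-t)) ^ n * Real.exp (-t) = expMaxDensity (n + 1) t / (n + 1) := by
  simp only [expMaxDensity, add_tsub_cancel_right]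
  push_cast
  field_simp

/-- Integration by parts: the difference of two consecutive distribution functions is
`-(1 - e⁻ᵗ) ^ n * e⁻ᵗ`, itself a multiple of the density for `n + 1`. -/
theorem integral_pow_succ_mul_succ (k n : ℕ) :
    ∫ t in Ioi 0, t ^ (k + 1) * expMaxDensity (n + 1) t =
      (∫ t in Ioi 0, t ^ (k + 1) * expMaxDensity n t) +
        (k + 1) / (n + 1) * ∫ t in Ioi 0, t ^ k * expMaxDensity (n + 1) t := by
  have hderiv (t : ℝ) : HasDerivAt
      (fun t ↦ t ^ (k + 1) * ((1 - Real.exp (-t)) ^ (n + 1) - (1 - Real.exp (-t)) ^ n))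
      (t ^ (k + 1) * expMaxDensity (n + 1) t - t ^ (k + 1) * expMaxDensity n t -
        (k + 1) / (n + 1) * (t ^ k * expMaxDensity (n + 1) t)) t := by
    refine ((hasDerivAt_pow (k + 1) t).fun_mul
      ((hasDerivAt_cdf (n + 1) t).fun_sub (hasDerivAt_cdf n t))).congr_deriv ?_
    simp only [add_tsub_cancel_right]
    push_cast
    linear_combination (-(k + 1) * t ^ k) * cdf_mul_exp_neg n t
  have hlim : Tendsto
      (fun t : ℝ ↦ t ^ (k + 1) * ((1 - Real.exp (-t)) ^ (n + 1) - (1 - Real.exp (-t)) ^ n))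
      atTop (𝓝 0) := by
    have h := (Real.tendsto_pow_mul_exp_neg_atTop_nhds_zero (k + 1)).neg.mul (tendsto_cdf_atTop n)
    rw [neg_zero, zero_mul] at h
    exact h.congr fun t ↦ by ring
  have h₁ := integrableOn_pow_mul (k + 1) (n + 1)
  have h₂ := integrableOn_pow_mul (k + 1) n
  have h₁₂ := h₁.fun_sub h₂
  have h₃ := (integrableOn_pow_mul k (n + 1)).const_mul (((k : ℝ) + 1) / (n + 1))
  have hFTC := integral_Ioi_of_hasDerivAt_of_tendsto' (fun t _ ↦ hderiv t) (h₁₂.sub h₃) hlim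
  rw [integral_sub h₁₂ h₃, integral_sub h₁ h₂, integral_const_mul] at hFTC
  rw [zero_pow k.succ_ne_zero, zero_mul, sub_zero] at hFTC
  linarith

theorem integral_pow_mul_succ (k n : ℕ) :
    ∫ t in Ioi 0, t ^ k * expMaxDensity (n + 1) t = k.factorial * starHarmonic k (n + 1) := by
  induction k generalizing n with
  | zero => simp [integral_eq_one, starHarmonic_zero_left]
  | succ k ihk =>
    suffices h : ∀ m, ∫ t in Ioi 0, t ^ (k + 1) * expMaxDensity m t =
        (k + 1).factorial * starHarmonic (k + 1) m from h (n + 1)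
    intro m
    induction m with
    | zero => simp [expMaxDensity, starHarmonic_succ_zero]
    | succ m ihm =>
      rw [integral_pow_succ_mul_succ, ihm, ihk, starHarmonic_succ_succ, Nat.factorial_succ]
      push_cast
      ring

theorem hasSum_div_sq {t : ℝ} (ht : 0 < t) :
    HasSum (fun n : ℕ ↦ expMaxDensity (n + 1) t / ((n : ℝ) + 1) ^ 2) (t / (Real.exp t - 1)) := by
  have hexp : Real.exp (-t) < 1 := by simpa using ht
  have hpos : 0 < 1 - Real.exp (-t) := by linarith
  have hlog := Real.hasSum_pow_div_log_of_abs_lt_one (x := 1 - Real.exp (-t))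
    (by rw [abs_of_pos hpos]; linarith [Real.exp_pos (-t)])
  rw [sub_sub_cancel, Real.log_exp, neg_neg] at hlog
  convert! hlog.mul_right (Real.exp (-t) / (1 - Real.exp (-t))) using 1
  · ext n
    rw [sq, ← div_div, ← cdf_mul_exp_neg]
    field_simp
    ring
  · have : Real.exp t - 1 ≠ 0 := by simpa [sub_eq_zero] using ht.ne'
    rw [Real.exp_neg] at hpos ⊢
    field_simp

end expMaxDensity

theorem hasSum_integral_pow_mul_expMaxDensity_div_sq (k : ℕ) :
    HasSum (fun n : ℕ ↦ ∫ t in Ioi 0, t ^ k * expMaxDensity (n + 1) t / ((n : ℝ) + 1) ^ 2)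
      (∫ t in Ioi 0, t ^ (k + 1) / (Real.exp t - 1)) := by
  refine hasSum_integral_of_nonneg
    (fun n ↦ ((expMaxDensity.integrableOn_pow_mul k (n + 1)).div_const _).aestronglyMeasurable)
    (fun n ↦ ?_) (integrableOn_pow_div_exp_sub_one k.succ_ne_zero) ?_
  all_goals filter_upwards [ae_restrict_mem measurableSet_Ioi] with t (ht : 0 < t)
  · have := expMaxDensity.nonneg (n + 1) ht.le
    positivity
  · simpa only [pow_succ, mul_div_assoc] using (expMaxDensity.hasSum_div_sq ht).mul_left (t ^ k)

theorem hasSum_starHarmonic_div_sq (k : ℕ) :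
    HasSum (fun n : ℕ ↦ (starHarmonic k (n + 1) : ℂ) / ((n : ℂ) + 1) ^ 2)
      ((k + 1) * riemannZeta (k + 2)) := by
  have h := Complex.hasSum_ofReal.mpr (hasSum_integral_pow_mul_expMaxDensity_div_sq k)
  rw [integral_pow_div_exp_sub_one k.succ_ne_zero] at h
  simp only [integral_div, expMaxDensity.integral_pow_mul_succ] at h
  have hk : (k.factorial : ℂ) ≠ 0 := mod_cast k.factorial_ne_zero
  convert! h.div_const (k.factorial : ℂ) using 1
  · ext n
    push_cast
    field_simp
  · rw [Nat.factorial_succ]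
    push_cast
    rw [add_assoc (k : ℂ), one_add_one_eq_two]
    field_simp

theorem stmt_9 :
    ∑' n : ℕ, ((harmonic (n + 1) : ℂ) ^ 2 + H2 (n + 1)) / ((n : ℂ) + 1) ^ 2 =
      6 * riemannZeta 4 := by
  simp only [← two_mul_starHarmonic_two, mul_div_assoc]
  rw [tsum_mul_left, (hasSum_starHarmonic_div_sq 2).tsum_eq]
  norm_num [← mul_assoc]
end

section
/- For every non-negative integer m, ∑_{n=1}^∞ 4^n / (n (n+1) · C(2(n+m), n+m) · C(n+m, m)) = (1 / C(2m, m)) · ( (m − 1/2) (4 O_m^{(2)} − 3 ζ(2)) + 1 ). -/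
open scoped BigOperators

/-!
Up to the factor `1 / C(2m, m)`, the summands are `B(a, n + 1) / (n + 2)` at `a = m + 1/2`, where
`B` is Euler's beta function. Since `B(a, b) - B(a, b + 1) = B(a + 1, b)`, the double series with
terms `B(a + k + 1, b + n) / (a + k) = B(a + k, b + n + 1) / (b + n)` telescopes in each variable,
which gives the duality `∑ₙ B(a, b + n) / (b + n) = ∑ₖ B(a + k, b) / (a + k)`; at `b = 1` its
right-hand side is `∑ₖ 1 / (a + k) ^ 2`. Another telescoping sum replaces the denominators `b + n`
by `b + n + 1`, and at `a = m + 1/2` the remaining series is a tail of the odd part of `4 ζ(2)`.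
-/

open Filter Topology
open ProbabilityTheory (beta beta_pos)

theorem hasSum_sub_succ {E : Type*} [AddCommGroup E] [TopologicalSpace E] [ContinuousSub E]
    [T2Space E] {s : ℕ → E} {l : E} (hsum : Summable fun n => s n - s (n + 1))
    (hs : Tendsto s atTop (𝓝 l)) : HasSum (fun n => s n - s (n + 1)) (s 0 - l) := by
  rw [hsum.hasSum_iff_tendsto_nat]
  simp only [Finset.sum_range_sub']
  exact hs.const_sub (s 0)

theorem summable_sub_succ_of_antitone_s13 {s : ℕ → ℝ} (hs : Antitone s) (hs_nonneg : ∀ n, 0 ≤ s n) :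
    Summable fun n => s n - s (n + 1) := by
  refine summable_of_sum_range_le (c := s 0) (fun n => sub_nonneg.2 (hs n.le_succ)) fun n => ?_
  rw [Finset.sum_range_sub']
  exact sub_le_self _ (hs_nonneg n)

section Beta

variable {a b : ℝ}

theorem beta_comm (a b : ℝ) : beta a b = beta b a := by
  rw [beta, beta, mul_comm, add_comm]

theorem beta_one_right (ha : 0 < a) : beta a 1 = 1 / a := by
  rw [beta, Real.Gamma_one, Real.Gamma_add_one ha.ne']
  field_simp

theorem beta_add_one_left (ha : a ≠ 0) (hab : a + b ≠ 0) :
    beta (a + 1) b = a / (a + b) * beta a b := by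
  rw [beta, beta, add_right_comm, Real.Gamma_add_one ha, Real.Gamma_add_one hab,
    div_mul_div_comm, mul_assoc]

theorem beta_add_one_right (hb : b ≠ 0) (hab : a + b ≠ 0) :
    beta a (b + 1) = b / (a + b) * beta a b := by
  rw [beta_comm, beta_add_one_left hb (by rwa [add_comm]), beta_comm, add_comm]

theorem beta_add_one_left_div (ha : 0 < a) (hb : 0 < b) :
    beta (a + 1) b / a = beta a (b + 1) / b := by
  rw [beta_add_one_left ha.ne' (by positivity), beta_add_one_right hb.ne' (by positivity)]
  field_simp

theorem beta_sub_beta_add_one_right (ha : 0 < a) (hb : 0 < b) :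
    beta a b - beta a (b + 1) = beta (a + 1) b := by
  rw [beta_add_one_left ha.ne' (by positivity), beta_add_one_right hb.ne' (by positivity)]
  field_simp
  ring

theorem beta_add_nat_sub_succ (ha : 0 < a) (hb : 0 < b) (n : ℕ) :
    beta a (b + n) - beta a (b + (n + 1 : ℕ)) = beta (a + 1) (b + n) := by
  rw [Nat.cast_succ, ← add_assoc, beta_sub_beta_add_one_right ha (by positivity)]

theorem antitone_beta_add_nat (ha : 0 < a) (hb : 0 < b) :
    Antitone fun n : ℕ => beta a (b + n) := by
  refine antitone_nat_of_succ_le fun n => ?_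
  rw [← sub_nonneg, beta_add_nat_sub_succ ha hb]
  exact (beta_pos (by positivity) (by positivity)).le

theorem summable_beta_add_one_add_nat (ha : 0 < a) (hb : 0 < b) :
    Summable fun n : ℕ => beta (a + 1) (b + n) := by
  simp only [← beta_add_nat_sub_succ ha hb]
  exact summable_sub_succ_of_antitone_s13 (antitone_beta_add_nat ha hb)
    fun n => (beta_pos ha (by positivity)).le

theorem beta_div_eq_mul_beta_add_one_left (ha : 0 < a) (hb : 0 < b) :
    beta a b / b = (1 / a + 1 / b) * beta (a + 1) b := by
  rw [beta_add_one_left ha.ne' (by positivity)]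
  field_simp
  ring

theorem summable_beta_add_nat_div (ha : 0 < a) (hb : 0 < b) :
    Summable fun n : ℕ => beta a (b + n) / (b + n) := by
  refine ((summable_beta_add_one_add_nat ha hb).mul_left (1 / a + 1 / b)).of_nonneg_of_le
    (fun n => (div_pos (beta_pos ha (by positivity)) (by positivity)).le) fun n => ?_
  rw [beta_div_eq_mul_beta_add_one_left ha (by positivity)]
  have beta_pos_n := beta_pos (add_pos ha one_pos) (add_pos_of_pos_of_nonneg hb n.cast_nonneg)
  gcongr
  exact le_add_of_nonneg_right n.cast_nonneg

theorem not_summable_one_div_add_nat (hb : 0 < b) : ¬ Summable fun n : ℕ => 1 / (b + n) := by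
  refine mt (fun hs => hs.congr fun n => ?_)
    ((Real.summable_one_div_nat_add_rpow b 1).not.2 (lt_irrefl 1))
  rw [Real.rpow_one, abs_of_pos (by positivity), add_comm]

theorem tendsto_beta_add_nat (ha : 0 < a) (hb : 0 < b) :
    Tendsto (fun n : ℕ => beta a (b + n)) atTop (𝓝 0) := by
  have beta_nonneg (n : ℕ) : 0 ≤ beta a (b + n) := (beta_pos ha (by positivity)).le
  have bddBelow : BddBelow (Set.range fun n : ℕ => beta a (b + n)) :=
    ⟨0, Set.forall_mem_range.2 beta_nonneg⟩
  set l := ⨅ n : ℕ, beta a (b + n) with hl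
  have tendsto_l := tendsto_atTop_ciInf (antitone_beta_add_nat ha hb) bddBelow
  -- A positive limit would bound `beta a (b + n) / (b + n)` below by a divergent harmonic series.
  have summable_l : Summable fun n : ℕ => l * (1 / (b + n)) :=
    (summable_beta_add_nat_div ha hb).of_nonneg_of_le
      (fun n => mul_nonneg (le_ciInf beta_nonneg) (by positivity)) fun n => by
        rw [mul_one_div]
        gcongr
        exact ciInf_le bddBelow n
  have l_eq_zero : l = 0 := by
    by_contra hne
    exact not_summable_one_div_add_nat hb ((summable_mul_left_iff hne).1 summable_l)
  rwa [← hl, l_eq_zero] at tendsto_l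

theorem hasSum_beta_add_one_add_nat (ha : 0 < a) (hb : 0 < b) :
    HasSum (fun n : ℕ => beta (a + 1) (b + n)) (beta a b) := by
  have hsum := summable_beta_add_one_add_nat ha hb
  simp only [← beta_add_nat_sub_succ ha hb] at hsum ⊢
  simpa using hasSum_sub_succ hsum (tendsto_beta_add_nat ha hb)

theorem tsum_beta_add_nat_div_comm (ha : 0 < a) (hb : 0 < b) :
    ∑' n : ℕ, beta a (b + n) / (b + n) = ∑' k : ℕ, beta (a + k) b / (a + k) := by
  let f (k n : ℕ) : ℝ := beta (a + k + 1) (b + n) / (a + k)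
  have f_nonneg (k n : ℕ) : 0 ≤ f k n :=
    div_nonneg (beta_pos (by positivity) (by positivity)).le (by positivity)
  have hasSum_row (k : ℕ) : HasSum (f k) (beta (a + k) b / (a + k)) :=
    (hasSum_beta_add_one_add_nat (by positivity) hb).div_const _
  have hasSum_col (n : ℕ) : HasSum (fun k => f k n) (beta a (b + n) / (b + n)) := by
    have hasSum_swapped := (hasSum_beta_add_one_add_nat (a := b + n) (by positivity) ha).div_const
      (b + n)
    simp only [beta_comm _ a, beta_comm _ (a + _)] at hasSum_swapped
    exact hasSum_swapped.congr_fun fun k => beta_add_one_left_div (by positivity) (by positivity)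
  have summable_f : Summable (Function.uncurry f) := by
    refine (summable_prod_of_nonneg fun p => f_nonneg p.1 p.2).2
      ⟨fun k => (hasSum_row k).summable, ?_⟩
    simpa only [Function.uncurry_apply_pair, (hasSum_row _).tsum_eq, beta_comm _ b]
      using summable_beta_add_nat_div hb ha
  simpa only [(hasSum_row _).tsum_eq, (hasSum_col _).tsum_eq] using summable_f.tsum_comm

theorem tsum_beta_add_nat_div_add_one (ha : 0 < a) (hb : 0 < b) :
    ∑' n : ℕ, beta a (b + n) / (b + n + 1) =
      (a + b - 1) / b * beta a b - (a - 1) * ∑' n : ℕ, beta a (b + n) / (b + n) := by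
  let s (n : ℕ) : ℝ := beta a (b + n) + (a - 1) * (beta a (b + n) / (b + n))
  have summable_div := summable_beta_add_nat_div ha hb
  have summable_div_add_one : Summable fun n : ℕ => beta a (b + n) / (b + n + 1) :=
    summable_div.of_nonneg_of_le
      (fun n => (div_pos (beta_pos ha (by positivity)) (by positivity)).le)
      fun n => div_le_div_of_nonneg_left (beta_pos ha (by positivity)).le (by positivity)
        (lt_add_one _).le
  have s_sub_succ (n : ℕ) : s n - s (n + 1) =
      beta a (b + n) / (b + n + 1) + (a - 1) * (beta a (b + n) / (b + n)) := by
    have hbn : 0 < b + n := by positivity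
    simp only [s, Nat.cast_succ, ← add_assoc]
    rw [beta_add_one_right hbn.ne' (by positivity)]
    field_simp
    ring
  have tendsto_s : Tendsto s atTop (𝓝 0) := by
    simpa using (tendsto_beta_add_nat ha hb).add
      (summable_div.tendsto_atTop_zero.const_mul (a - 1))
  have summable_s := (summable_div_add_one.add (summable_div.mul_left (a - 1))).congr
    fun n => (s_sub_succ n).symm
  have tsum_s := (hasSum_sub_succ summable_s tendsto_s).tsum_eq
  rw [tsum_congr s_sub_succ, summable_div_add_one.tsum_add (summable_div.mul_left _),
    tsum_mul_left, ← eq_sub_iff_add_eq] at tsum_s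
  rw [tsum_s]
  simp only [s, Nat.cast_zero, add_zero]
  field_simp
  ring

theorem tsum_beta_nat_add_one_div_nat_add_two (ha : 0 < a) :
    ∑' n : ℕ, beta a (n + 1) / (n + 2) = 1 - (a - 1) * ∑' k : ℕ, 1 / (a + k) ^ 2 := by
  have duality : ∑' n : ℕ, beta a (1 + n) / (1 + n) = ∑' k : ℕ, 1 / (a + k) ^ 2 := by
    rw [tsum_beta_add_nat_div_comm ha one_pos]
    refine tsum_congr fun k => ?_
    rw [beta_one_right (by positivity), div_div, sq]
  calc ∑' n : ℕ, beta a (n + 1) / (n + 2) = ∑' n : ℕ, beta a (1 + n) / (1 + n + 1) :=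
        tsum_congr fun n => by ring_nf
    _ = 1 - (a - 1) * ∑' k : ℕ, 1 / (a + k) ^ 2 := by
        rw [tsum_beta_add_nat_div_add_one ha one_pos, duality, beta_one_right ha]
        field_simp
        ring

end Beta

theorem Gamma_nat_add_half_eq_centralBinom (n : ℕ) :
    Real.Gamma (n + 1 / 2) = n.centralBinom * n.factorial * √Real.pi / 4 ^ n := by
  induction n with
  | zero => simp [Real.Gamma_one_half_eq, -one_div]
  | succ n ih =>
    have centralBinom_succ : ((n : ℝ) + 1) * (n + 1).centralBinom =
        2 * (2 * n + 1) * n.centralBinom := mod_cast n.succ_mul_centralBinom_succ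
    rw [Nat.cast_succ, add_right_comm, Real.Gamma_add_one (by positivity), ih,
      Nat.factorial_succ, pow_succ]
    push_cast
    field_simp
    linear_combination -2 * centralBinom_succ

theorem beta_nat_add_half_nat_add_one (m n : ℕ) :
    beta (m + 1 / 2) (n + 1) = m.centralBinom *
      (4 ^ (n + 1) / ((n + 1) * (n + 1 + m).centralBinom * (n + 1 + m).choose m)) := by
  have choose_mul_factorial : ((n + 1 + m).choose m : ℝ) * ((n + 1) * n.factorial) *
      m.factorial = (n + 1 + m).factorial :=
    mod_cast Nat.add_choose_mul_factorial_mul_factorial (n + 1) m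
  have arg_add : (m : ℝ) + 1 / 2 + (n + 1) = (n + 1 + m : ℕ) + 1 / 2 := by
    push_cast
    ring
  rw [beta, Real.Gamma_nat_eq_factorial, arg_add, Gamma_nat_add_half_eq_centralBinom,
    Gamma_nat_add_half_eq_centralBinom, ← choose_mul_factorial]
  field_simp
  ring

theorem hasSum_one_div_nat_add_half_pow {r : ℕ} (hr : 1 < r) :
    HasSum (fun k : ℕ => 1 / ((k : ℂ) + 1 / 2) ^ r) ((2 ^ r - 1) * riemannZeta r) := by
  let f (n : ℕ) : ℂ := 1 / ((n : ℂ) / 2) ^ r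
  have f_eq (n : ℕ) : f n = 2 ^ r * (1 / (n : ℂ) ^ r) := by
    simp only [f, div_pow, one_div_div, mul_one_div]
  have f_even (k : ℕ) : f (2 * k) = 1 / (k : ℂ) ^ r := by
    simp [f]
  have f_odd (k : ℕ) : f (2 * k + 1) = 1 / ((k : ℂ) + 1 / 2) ^ r := by
    simp only [f]
    push_cast
    ring_nf
  have summable_zeta : Summable fun n : ℕ => 1 / (n : ℂ) ^ r := by
    simpa using (Complex.summable_one_div_nat_cpow (p := r)).2 (by simpa)
  have summable_odd : Summable fun k : ℕ => f (2 * k + 1) :=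
    ((summable_zeta.mul_left (2 ^ r)).congr fun n => (f_eq n).symm).comp_injective
      (i := fun k : ℕ => 2 * k + 1) fun _ _ => by simp
  have even_add_odd := tsum_even_add_odd (summable_zeta.congr fun k => (f_even k).symm) summable_odd
  simp only [f_odd] at summable_odd
  simp only [f_even, f_odd, f_eq, tsum_mul_left, ← zeta_nat_eq_tsum_of_gt_one hr] at even_add_odd
  rw [summable_odd.hasSum_iff]
  linear_combination even_add_odd

theorem two_pow_mul_oddH (r m : ℕ) :
    2 ^ r * oddH r m = ∑ k ∈ Finset.range m, 1 / ((k : ℂ) + 1 / 2) ^ r := by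
  rw [oddH, Finset.mul_sum, ← Finset.Ico_add_one_right_eq_Icc, Finset.sum_Ico_eq_sum_range]
  refine Finset.sum_congr (by rw [Nat.add_sub_cancel]) fun k _ => ?_
  have odd_eq : 2 * ((1 + k : ℕ) : ℂ) - 1 = ((k : ℂ) + 1 / 2) * 2 := by
    push_cast
    ring
  rw [odd_eq, mul_pow]
  field_simp

theorem tsum_one_div_nat_add_half_add_nat_pow {r : ℕ} (hr : 1 < r) (m : ℕ) :
    ∑' k : ℕ, 1 / ((m : ℂ) + 1 / 2 + k) ^ r =
      (2 ^ r - 1) * riemannZeta r - 2 ^ r * oddH r m := by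
  have hasSum_half := hasSum_one_div_nat_add_half_pow hr
  rw [← hasSum_half.tsum_eq, two_pow_mul_oddH, ← hasSum_half.summable.sum_add_tsum_nat_add m,
    add_sub_cancel_left]
  refine tsum_congr fun k => ?_
  push_cast
  ring_nf

theorem stmt_13 (m : ℕ) :
    ∑' n : ℕ, (4 : ℂ) ^ (n + 1) /
        (((n : ℂ) + 1) * ((n : ℂ) + 2) * (Nat.choose (2 * (n + 1 + m)) (n + 1 + m) : ℂ) *
          (Nat.choose (n + 1 + m) m : ℂ)) =
      (1 / (Nat.choose (2 * m) m : ℂ)) *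
        (((m : ℂ) - 1 / 2) * (4 * oddH 2 m - 3 * riemannZeta 2) + 1) := by
  simp only [← Nat.centralBinom_eq_two_mul_choose]
  have centralBinom_ne_zero : (m.centralBinom : ℂ) ≠ 0 := mod_cast m.centralBinom_ne_zero
  have term_eq (n : ℕ) : (4 : ℂ) ^ (n + 1) / ((n + 1) * (n + 2) *
      (n + 1 + m).centralBinom * (n + 1 + m).choose m) =
      1 / m.centralBinom * ((beta (m + 1 / 2) (n + 1) / (n + 2) : ℝ) : ℂ) := by
    rw [beta_nat_add_half_nat_add_one]
    push_cast
    field_simp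
  have tsum_one_div_sq := tsum_one_div_nat_add_half_add_nat_pow one_lt_two m
  rw [tsum_congr term_eq, tsum_mul_left, ← Complex.ofReal_tsum,
    tsum_beta_nat_add_one_div_nat_add_two (by positivity)]
  push_cast at tsum_one_div_sq ⊢
  rw [tsum_one_div_sq]
  ring
end
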